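/- Fix α > -1 and ξ₀ < min(j_α, j_{α+1}). Then uniformly for 0 < ξ < ξ₀, the ratio K_Be(μ, ξ²)/J_α(ξ) is O(μ^{α/2}) as μ ranges over (0,1] and O(μ^{-1/4}) for μ ≥ 1. -/

import Mathlib

open MeasureTheory Real Set

/-- Bessel function of the first kind of order `α`. -/
noncomputable def besselJ (α : ℝ) (x : ℝ) : ℝ :=
  ∑' m : ℕ, ((-1 : ℝ) ^ m / (m.factorial * Real.Gamma ((m : ℝ) + α + 1))) *
    (x / 2) ^ (2 * (m : ℝ) + α)

/-- The first positive zero of the Bessel function `J_α`. -/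
noncomputable def besselJZero (α : ℝ) : ℝ :=
  sInf {x : ℝ | 0 < x ∧ besselJ α x = 0}

/-- The Bessel kernel, via its integral representation. -/
noncomputable def besselKernel (α lam mu : ℝ) : ℝ :=
  (1 / 4) * ∫ ρ in (0:ℝ)..1, besselJ α (Real.sqrt (ρ * lam)) * besselJ α (Real.sqrt (ρ * mu))

/-!
Write `J_α(x) = (x/2)^α C_α(-(x/2)²)` with `C_α` the entire Bessel–Clifford function. On a bounded
interval, `J_α(x)` is therefore at most a multiple of `x^α`, and it is bounded below by such a
multiple on any compact set free of zeros, because `C_α(0) = 1/Γ(α+1) ≠ 0`. For large `x`, the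
function `u(x) = x^{α+1/2} C_α(-(x/2)²)`, a multiple of `√x J_α(x)`, solves
`u'' = ((α² - 1/4)/x² - 1) u`; the perturbation of `u'' = -u` is integrable at infinity, so the
energy `u² + u'²` stays bounded, which is `J_α(x) = O(x^{-1/2})`. Inserting these bounds into the
integral defining the kernel gives `K_Be(μ, ξ²) = O(ξ^α w(μ))` with `w(μ) = μ^{α/2}` or `μ^{-1/4}`,
and dividing by `J_α(ξ)`, which is at least a multiple of `ξ^α`, removes the factor `ξ^α`.
-/

open Filter

section ExponentialSeries

variable {a : ℕ → ℝ} {K : ℝ}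

lemma summable_mul_pow_div_factorial (ha : ∀ m, |a m| ≤ K) (t : ℝ) :
    Summable fun m : ℕ => a m * (t ^ m / m.factorial) := by
  refine ((Real.summable_pow_div_factorial |t|).mul_left K).of_norm_bounded fun m => ?_
  rw [norm_mul, norm_div, norm_pow, Real.norm_natCast]
  exact mul_le_mul_of_nonneg_right (ha m) (by positivity)

lemma natCast_succ_mul_pow_div_factorial (t : ℝ) (m : ℕ) :
    ((m + 1 : ℕ) : ℝ) * t ^ m / (m + 1).factorial = t ^ m / m.factorial := by
  rw [Nat.factorial_succ, Nat.cast_mul]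
  exact mul_div_mul_left _ _ (Nat.cast_ne_zero.2 m.succ_ne_zero)

lemma hasDerivAt_tsum_mul_pow_div_factorial (ha : ∀ m, |a m| ≤ K) (t : ℝ) :
    HasDerivAt (fun t => ∑' m : ℕ, a m * (t ^ m / m.factorial))
      (∑' m : ℕ, a (m + 1) * (t ^ m / m.factorial)) t := by
  set R := |t| + 1
  have ht : t ∈ Ioo (-R) R := abs_lt.1 (lt_add_one |t|)
  have hbound : ∀ (m : ℕ) (y : ℝ), y ∈ Ioo (-R) R →
      ‖a m * (m * y ^ (m - 1) / m.factorial)‖ ≤ K * (m * R ^ (m - 1) / m.factorial) := by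
    intro m y hy
    rw [norm_mul, norm_div, norm_mul, norm_pow, Real.norm_natCast, Real.norm_natCast]
    have hK : 0 ≤ K := (abs_nonneg _).trans (ha m)
    gcongr
    exacts [ha m, (abs_lt.2 hy).le]
  have hsum : Summable fun m : ℕ => K * (m * R ^ (m - 1) / m.factorial) := by
    rw [← summable_nat_add_iff 1]
    simpa only [Nat.add_sub_cancel, natCast_succ_mul_pow_div_factorial] using
      (Real.summable_pow_div_factorial R).mul_left K
  have hterm : ∀ (m : ℕ) (y : ℝ), y ∈ Ioo (-R) R →
      HasDerivAt (fun y => a m * (y ^ m / m.factorial))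
        (a m * (m * y ^ (m - 1) / m.factorial)) y :=
    fun m y _ => ((hasDerivAt_pow m y).div_const _).const_mul (a m)
  refine (hasDerivAt_tsum_of_isPreconnected hsum isOpen_Ioo isPreconnected_Ioo hterm hbound ht
    (summable_mul_pow_div_factorial ha t) ht).congr_deriv ?_
  rw [(hsum.of_norm_bounded fun m => hbound m t ht).tsum_eq_zero_add]
  simp only [Nat.add_sub_cancel, natCast_succ_mul_pow_div_factorial, Nat.cast_zero, zero_mul,
    zero_div, mul_zero, zero_add]

lemma hasSum_natCast_mul_mul_pow_div_factorial (ha : ∀ m, |a m| ≤ K) (t : ℝ) :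
    HasSum (fun m : ℕ => m * (a m * (t ^ m / m.factorial)))
      (t * ∑' m : ℕ, a (m + 1) * (t ^ m / m.factorial)) := by
  have hterm : ∀ m : ℕ, ((m + 1 : ℕ) : ℝ) * (a (m + 1) * (t ^ (m + 1) / (m + 1).factorial)) =
      t * (a (m + 1) * (t ^ m / m.factorial)) := by
    intro m
    rw [← natCast_succ_mul_pow_div_factorial t m]
    ring
  rw [← hasSum_nat_add_iff' 1]
  simpa only [hterm, Finset.range_one, Finset.sum_singleton, Nat.cast_zero, zero_mul, sub_zero]
    using (summable_mul_pow_div_factorial (fun m => ha (m + 1)) t).hasSum.mul_left t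

end ExponentialSeries

section ReciprocalGamma

lemma inv_Gamma_eq_mul_inv_Gamma_add_one (s : ℝ) :
    (Real.Gamma s)⁻¹ = s * (Real.Gamma (s + 1))⁻¹ := by
  rcases eq_or_ne s 0 with rfl | hs
  · simp
  · rw [Real.Gamma_add_one hs, mul_inv, mul_inv_cancel_left₀ hs]

lemma exists_abs_inv_Gamma_natCast_add_le (s : ℝ) :
    ∃ K, ∀ m : ℕ, |(Real.Gamma (m + s))⁻¹| ≤ K := by
  refine Asymptotics.isBigO_one_nat_atTop_iff (f := fun m : ℕ => (Real.Gamma (m + s))⁻¹).1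
    (Asymptotics.IsBigO.of_bound 1 ?_)
  have hlarge : ∀ᶠ m : ℕ in atTop, 2 ≤ (m : ℝ) + s :=
    (tendsto_natCast_atTop_atTop.atTop_add tendsto_const_nhds).eventually_ge_atTop 2
  filter_upwards [hlarge] with m hm
  have hGamma : 1 ≤ Real.Gamma (m + s) := by
    simpa only [Real.Gamma_two] using
      Real.Gamma_strictMonoOn_Ici.monotoneOn self_mem_Ici (mem_Ici.2 hm) hm
  rw [norm_inv, Real.norm_of_nonneg (zero_le_one.trans hGamma), norm_one, mul_one]
  exact inv_le_one_of_one_le₀ hGamma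

end ReciprocalGamma

/-- The Bessel–Clifford function `C_β`, i.e. the regularized hypergeometric function
`₀F₁(; β + 1; t) / Γ(β + 1)`: the entire part of the Bessel function `J_β`. At the poles of `Γ` the
convention `Γ = 0` gives the correct value `0` of `1 / Γ`. -/
noncomputable def besselClifford (β t : ℝ) : ℝ :=
  ∑' m : ℕ, (Real.Gamma (m + (β + 1)))⁻¹ * (t ^ m / m.factorial)

namespace besselClifford

lemma apply_zero (β : ℝ) : besselClifford β 0 = (Real.Gamma (β + 1))⁻¹ := by
  rw [besselClifford, tsum_eq_single 0 fun m hm => by simp [hm]]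
  simp

lemma tsum_shift (β t : ℝ) :
    ∑' m : ℕ, (Real.Gamma ((m + 1 : ℕ) + (β + 1)))⁻¹ * (t ^ m / m.factorial) =
      besselClifford (β + 1) t := by
  simp only [besselClifford, Nat.cast_add_one, add_assoc, add_left_comm (1 : ℝ) β]

lemma hasDerivAt (β t : ℝ) : HasDerivAt (besselClifford β) (besselClifford (β + 1) t) t := by
  obtain ⟨K, hK⟩ := exists_abs_inv_Gamma_natCast_add_le (β + 1)
  rw [← tsum_shift]
  exact hasDerivAt_tsum_mul_pow_div_factorial hK t

lemma recurrence (β t : ℝ) :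
    besselClifford β t =
      (β + 1) * besselClifford (β + 1) t + t * besselClifford (β + 1 + 1) t := by
  obtain ⟨K, hK⟩ := exists_abs_inv_Gamma_natCast_add_le (β + 1 + 1)
  have hsum := ((summable_mul_pow_div_factorial hK t).hasSum.mul_left (β + 1)).add
    (hasSum_natCast_mul_mul_pow_div_factorial hK t)
  rw [tsum_shift] at hsum
  refine Eq.trans (tsum_congr fun m => ?_) hsum.tsum_eq
  rw [inv_Gamma_eq_mul_inv_Gamma_add_one, add_assoc (m : ℝ)]
  ring

lemma hasDerivAt_comp_neg_sq (β x : ℝ) :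
    HasDerivAt (fun x => besselClifford β (-(x / 2) ^ 2))
      (-(x / 2) * besselClifford (β + 1) (-(x / 2) ^ 2)) x := by
  have hsq : HasDerivAt (fun x : ℝ => -(x / 2) ^ 2) (-(x / 2)) x :=
    (((hasDerivAt_id x).div_const 2).pow 2).neg.congr_deriv (by simp; ring)
  exact ((hasDerivAt β _).comp x hsq).congr_deriv (mul_comm _ _)

lemma continuous_comp_neg_sq (β : ℝ) : Continuous fun x => besselClifford β (-(x / 2) ^ 2) :=
  continuous_iff_continuousAt.2 fun x => (hasDerivAt_comp_neg_sq β x).continuousAt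

lemma hasDerivAt_rpow_mul_comp_neg_sq (s β : ℝ) {x : ℝ} (hx : 0 < x) :
    HasDerivAt (fun x => x ^ s * besselClifford β (-(x / 2) ^ 2))
      (s * (x ^ (s - 1) * besselClifford β (-(x / 2) ^ 2)) -
        1 / 2 * (x ^ (s + 1) * besselClifford (β + 1) (-(x / 2) ^ 2))) x := by
  refine ((Real.hasDerivAt_rpow_const (Or.inl hx.ne')).mul
    (hasDerivAt_comp_neg_sq β x)).congr_deriv ?_
  rw [Real.rpow_add_one hx.ne']
  ring

end besselClifford

section Energy

variable {u v r G g : ℝ → ℝ} {a : ℝ}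

lemma hasDerivAt_energy_mul_exp_neg {x : ℝ} (hu : HasDerivAt u (v x) x)
    (hv : HasDerivAt v ((r x - 1) * u x) x) (hG : HasDerivAt G (g x) x) :
    HasDerivAt (fun x => (u x ^ 2 + v x ^ 2) * Real.exp (-G x))
      ((r x * (2 * (u x * v x)) - g x * (u x ^ 2 + v x ^ 2)) * Real.exp (-G x)) x := by
  refine (((hu.pow 2).add (hv.pow 2)).mul hG.neg.exp).congr_deriv ?_
  simp only [Pi.add_apply, Pi.neg_apply, Pi.pow_apply, Nat.cast_ofNat]
  ring

-- The energy grows at rate `2 r u v`, at most `g = G'` times itself, which `exp (-G)` absorbs.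
lemma antitoneOn_energy_mul_exp_neg (hu : ∀ x ∈ Ici a, HasDerivAt u (v x) x)
    (hv : ∀ x ∈ Ici a, HasDerivAt v ((r x - 1) * u x) x)
    (hG : ∀ x ∈ Ici a, HasDerivAt G (g x) x) (hr : ∀ x ∈ Ici a, |r x| ≤ g x) :
    AntitoneOn (fun x => (u x ^ 2 + v x ^ 2) * Real.exp (-G x)) (Ici a) := by
  have hderiv := fun x hx => hasDerivAt_energy_mul_exp_neg (hu x hx) (hv x hx) (hG x hx)
  refine antitoneOn_of_hasDerivWithinAt_nonpos (convex_Ici a)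
    (fun x hx => (hderiv x hx).continuousAt.continuousWithinAt)
    (fun x hx => (hderiv x (interior_subset hx)).hasDerivWithinAt) fun x hx => ?_
  have hAMGM : |2 * (u x * v x)| ≤ u x ^ 2 + v x ^ 2 :=
    abs_le.2 ⟨by linarith [sq_nonneg (u x + v x)], by linarith [sq_nonneg (u x - v x)]⟩
  have hle : r x * (2 * (u x * v x)) ≤ g x * (u x ^ 2 + v x ^ 2) :=
    calc r x * (2 * (u x * v x)) ≤ |r x| * |2 * (u x * v x)| := by
          rw [← abs_mul]; exact le_abs_self _
      _ ≤ g x * (u x ^ 2 + v x ^ 2) := by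
          have hrx := hr x (interior_subset hx)
          gcongr
          exact (abs_nonneg _).trans hrx
  exact mul_nonpos_of_nonpos_of_nonneg (sub_nonpos.2 hle) (Real.exp_pos _).le

lemma exists_abs_le_of_perturbed_oscillator {B : ℝ} (hu : ∀ x ∈ Ici a, HasDerivAt u (v x) x)
    (hv : ∀ x ∈ Ici a, HasDerivAt v ((r x - 1) * u x) x)
    (hG : ∀ x ∈ Ici a, HasDerivAt G (g x) x) (hr : ∀ x ∈ Ici a, |r x| ≤ g x)
    (hGB : ∀ x ∈ Ici a, G x ≤ B) :
    ∃ M > 0, ∀ x ∈ Ici a, |u x| ≤ M := by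
  set W : ℝ → ℝ := fun x => (u x ^ 2 + v x ^ 2) * Real.exp (-G x)
  have hW : AntitoneOn W (Ici a) := antitoneOn_energy_mul_exp_neg hu hv hG hr
  have hWa : 0 ≤ W a := by positivity
  refine ⟨√(W a * Real.exp B) + 1, by positivity, fun x hx => ?_⟩
  have henergy : u x ^ 2 ≤ W a * Real.exp B :=
    calc u x ^ 2 ≤ u x ^ 2 + v x ^ 2 := le_add_of_nonneg_right (sq_nonneg _)
      _ = W x * Real.exp (G x) := by
          rw [mul_assoc, ← Real.exp_add, neg_add_cancel, Real.exp_zero, mul_one]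
      _ ≤ W a * Real.exp B := by
          exact mul_le_mul (hW self_mem_Ici hx hx) (Real.exp_le_exp.2 (hGB x hx))
            (Real.exp_pos _).le hWa
  exact (Real.abs_le_sqrt henergy).trans (le_add_of_nonneg_right zero_le_one)

end Energy

section BesselFunction

lemma besselJ_eq_rpow_mul_besselClifford (α : ℝ) {x : ℝ} (hx : 0 < x) :
    besselJ α x = (x / 2) ^ α * besselClifford α (-(x / 2) ^ 2) := by
  rw [besselJ, besselClifford, ← tsum_mul_left]
  refine tsum_congr fun m => ?_
  have hpow : (x / 2) ^ (2 * (m : ℝ) + α) = ((x / 2) ^ 2) ^ m * (x / 2) ^ α := by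
    rw [Real.rpow_add (by positivity), Real.rpow_mul (by positivity), Real.rpow_natCast,
      Real.rpow_two]
  rw [hpow, neg_pow ((x / 2) ^ 2), add_assoc (m : ℝ)]
  ring

lemma abs_besselJ_eq (α : ℝ) {x : ℝ} (hx : 0 < x) :
    |besselJ α x| = (1 / 2) ^ α * x ^ α * |besselClifford α (-(x / 2) ^ 2)| := by
  rw [besselJ_eq_rpow_mul_besselClifford α hx, abs_mul, abs_of_pos (by positivity),
    div_eq_mul_one_div, Real.mul_rpow hx.le (by positivity), mul_comm (x ^ α)]

lemma exists_abs_besselJ_le_rpow (α R : ℝ) :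
    ∃ M > 0, ∀ x ∈ Ioc 0 R, |besselJ α x| ≤ M * x ^ α := by
  obtain ⟨B, hB⟩ := (isCompact_Icc (a := 0) (b := R)).exists_bound_of_continuousOn
    (besselClifford.continuous_comp_neg_sq α).continuousOn
  refine ⟨(1 / 2) ^ α * (|B| + 1), by positivity, fun x hx => ?_⟩
  have hC : |besselClifford α (-(x / 2) ^ 2)| ≤ |B| + 1 :=
    (hB x (Ioc_subset_Icc_self hx)).trans ((le_abs_self B).trans (lt_add_one _).le)
  have hx0 : 0 < x := hx.1
  calc |besselJ α x| ≤ (1 / 2) ^ α * x ^ α * (|B| + 1) := by rw [abs_besselJ_eq α hx0]; gcongr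
    _ = (1 / 2) ^ α * (|B| + 1) * x ^ α := by ring

-- Bessel's equation in the form `u'' = ((α² - 1/4) / x² - 1) u`, with `u'` written out.
lemma hasDerivAt_deriv_rpow_mul_besselClifford (α : ℝ) {x : ℝ} (hx : 0 < x) :
    HasDerivAt
      (fun x => (α + 1 / 2) * (x ^ (α + 1 / 2 - 1) * besselClifford α (-(x / 2) ^ 2)) -
        1 / 2 * (x ^ (α + 1 / 2 + 1) * besselClifford (α + 1) (-(x / 2) ^ 2)))
      (((α ^ 2 - 1 / 4) / x ^ 2 - 1) *
        (x ^ (α + 1 / 2) * besselClifford α (-(x / 2) ^ 2))) x := by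
  refine (((besselClifford.hasDerivAt_rpow_mul_comp_neg_sq _ α hx).const_mul _).sub
    ((besselClifford.hasDerivAt_rpow_mul_comp_neg_sq _ (α + 1) hx).const_mul _)).congr_deriv ?_
  simp only [sub_add_cancel, add_sub_cancel_right, Real.rpow_sub_one hx.ne',
    Real.rpow_add_one hx.ne']
  rw [besselClifford.recurrence α]
  field_simp
  ring

lemma exists_abs_rpow_mul_besselClifford_le (α : ℝ) :
    ∃ M > 0, ∀ x ∈ Ici (1 : ℝ), |x ^ (α + 1 / 2) * besselClifford α (-(x / 2) ^ 2)| ≤ M := by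
  have hpos : ∀ x ∈ Ici (1 : ℝ), 0 < x := fun x hx => one_pos.trans_le hx
  refine exists_abs_le_of_perturbed_oscillator (r := fun x => (α ^ 2 - 1 / 4) / x ^ 2)
    (g := fun x => |α ^ 2 - 1 / 4| / x ^ 2) (G := fun x => -|α ^ 2 - 1 / 4| * x⁻¹) (B := 0)
    (fun x hx => besselClifford.hasDerivAt_rpow_mul_comp_neg_sq _ α (hpos x hx))
    (fun x hx => hasDerivAt_deriv_rpow_mul_besselClifford α (hpos x hx))
    (fun x hx => ((hasDerivAt_inv (hpos x hx).ne').const_mul _).congr_deriv (by ring))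
    (fun x _ => by rw [abs_div, abs_of_nonneg (sq_nonneg x)])
    (fun x hx => ?_)
  exact mul_nonpos_of_nonpos_of_nonneg (neg_nonpos.2 (abs_nonneg _)) (inv_pos.2 (hpos x hx)).le

lemma exists_abs_besselJ_le_rpow_neg_half (α : ℝ) :
    ∃ M > 0, ∀ x ∈ Ici (1 : ℝ), |besselJ α x| ≤ M * x ^ (-(1 : ℝ) / 2) := by
  obtain ⟨M, hM, hbound⟩ := exists_abs_rpow_mul_besselClifford_le α
  refine ⟨(1 / 2) ^ α * M, by positivity, fun x hx => ?_⟩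
  have hx0 : 0 < x := one_pos.trans_le hx
  have hsplit : x ^ α = x ^ (-(1 : ℝ) / 2) * x ^ (α + 1 / 2) := by
    rw [← Real.rpow_add hx0]; ring_nf
  calc |besselJ α x|
      = (1 / 2) ^ α * x ^ (-(1 : ℝ) / 2) *
          |x ^ (α + 1 / 2) * besselClifford α (-(x / 2) ^ 2)| := by
        rw [abs_besselJ_eq α hx0, abs_mul, abs_of_pos (Real.rpow_pos_of_pos hx0 _), hsplit]; ring
    _ ≤ (1 / 2) ^ α * x ^ (-(1 : ℝ) / 2) * M := by gcongr; exact hbound x hx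
    _ = (1 / 2) ^ α * M * x ^ (-(1 : ℝ) / 2) := by ring

lemma besselJ_ne_zero_of_lt_besselJZero {α x : ℝ} (hx : 0 < x) (hx' : x < besselJZero α) :
    besselJ α x ≠ 0 := fun hzero =>
  notMem_of_lt_csInf hx' ⟨0, fun _ hy => hy.1.le⟩ ⟨hx, hzero⟩

lemma exists_mul_rpow_le_abs_besselJ {α : ℝ} (hα : -1 < α) {K : Set ℝ} (hK : IsCompact K)
    (hne : ∀ x ∈ K, 0 < x → besselJ α x ≠ 0) :
    ∃ c > 0, ∀ x ∈ K, 0 < x → c * x ^ α ≤ |besselJ α x| := by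
  have hpos : ∀ x ∈ K ∩ Ici 0, 0 < |besselClifford α (-(x / 2) ^ 2)| := by
    rintro x ⟨hxK, hx⟩
    rw [abs_pos]
    rcases (mem_Ici.1 hx).eq_or_lt with rfl | hx0
    · simpa [besselClifford.apply_zero] using (Real.Gamma_pos_of_pos (by linarith)).ne'
    · refine right_ne_zero_of_mul (a := (x / 2) ^ α) ?_
      rw [← besselJ_eq_rpow_mul_besselClifford α hx0]
      exact hne x hxK hx0
  obtain ⟨c, hc, hmin⟩ := (hK.inter_right isClosed_Ici).exists_forall_le'
    (besselClifford.continuous_comp_neg_sq α).abs.continuousOn hpos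
  refine ⟨(1 / 2) ^ α * c, by positivity, fun x hxK hx => ?_⟩
  calc (1 / 2) ^ α * c * x ^ α = (1 / 2) ^ α * x ^ α * c := by ring
    _ ≤ |besselJ α x| := by
      rw [abs_besselJ_eq α hx]
      gcongr
      exact hmin x ⟨hxK, hx.le⟩

end BesselFunction

section BesselKernel

lemma sqrt_mul_rpow (s : ℝ) {x y : ℝ} (hx : 0 ≤ x) (hy : 0 ≤ y) :
    √(x * y) ^ s = x ^ (s / 2) * y ^ (s / 2) := by
  rw [← Real.rpow_div_two_eq_sqrt s (mul_nonneg hx hy), Real.mul_rpow hx hy]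

lemma exists_abs_besselJ_sqrt_mul_le (α R : ℝ) :
    ∃ M > 0, ∀ t ∈ Ioc 0 R, ∀ ρ ∈ Ioc (0 : ℝ) 1,
      |besselJ α √(ρ * t)| ≤ M * t ^ (α / 2) * ρ ^ (α / 2) := by
  obtain ⟨M, hM, hbound⟩ := exists_abs_besselJ_le_rpow α √R
  refine ⟨M, hM, fun t ht ρ hρ => ?_⟩
  have hmem : √(ρ * t) ∈ Ioc 0 √R :=
    ⟨Real.sqrt_pos.2 (mul_pos hρ.1 ht.1),
      Real.sqrt_le_sqrt ((mul_le_of_le_one_left ht.1.le hρ.2).trans ht.2)⟩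
  refine (hbound _ hmem).trans_eq ?_
  rw [sqrt_mul_rpow α hρ.1.le ht.1.le]
  ring

-- Large arguments alone would give `ρ ^ (-1/4)`; the weight `ρ ^ (-1/2)` comes from `ρ * t < 1`,
-- where `s ^ α ≤ s⁻¹` for `s = √(ρ * t)`, and is still integrable against `ρ ^ (α / 2)`.
lemma exists_abs_besselJ_sqrt_mul_le_of_one_le {α : ℝ} (hα : -1 < α) :
    ∃ M > 0, ∀ t ∈ Ici (1 : ℝ), ∀ ρ ∈ Ioc (0 : ℝ) 1,
      |besselJ α √(ρ * t)| ≤ M * t ^ (-(1 : ℝ) / 4) * ρ ^ (-(1 : ℝ) / 2) := by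
  obtain ⟨M₀, hM₀, hsmall⟩ := exists_abs_besselJ_le_rpow α 1
  obtain ⟨M₁, -, hlarge⟩ := exists_abs_besselJ_le_rpow_neg_half α
  refine ⟨max M₀ M₁, lt_max_of_lt_left hM₀, fun t ht ρ hρ => ?_⟩
  have hρ0 : 0 < ρ := hρ.1
  have ht0 : 0 < t := one_pos.trans_le ht
  have hs : 0 < √(ρ * t) := Real.sqrt_pos.2 (mul_pos hρ0 ht0)
  rw [mul_assoc]
  rcases le_total √(ρ * t) 1 with hle | hge
  · calc |besselJ α √(ρ * t)| ≤ M₀ * √(ρ * t) ^ α := hsmall _ ⟨hs, hle⟩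
      _ ≤ max M₀ M₁ * √(ρ * t) ^ (-1 : ℝ) := by
        gcongr ?_ * ?_
        exacts [le_max_left _ _, Real.rpow_le_rpow_of_exponent_ge hs hle hα.le]
      _ ≤ max M₀ M₁ * (t ^ (-(1 : ℝ) / 4) * ρ ^ (-(1 : ℝ) / 2)) := by
        rw [sqrt_mul_rpow _ hρ0.le ht0.le, mul_comm (ρ ^ _)]
        gcongr _ * (?_ * _)
        exact Real.rpow_le_rpow_of_exponent_le ht (by norm_num)
  · calc |besselJ α √(ρ * t)| ≤ M₁ * √(ρ * t) ^ (-(1 : ℝ) / 2) := hlarge _ hge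
      _ ≤ max M₀ M₁ * (t ^ (-(1 : ℝ) / 4) * ρ ^ (-(1 : ℝ) / 2)) := by
        rw [sqrt_mul_rpow _ hρ0.le ht0.le, mul_comm (ρ ^ _), div_div,
          show (2 : ℝ) * 2 = 4 by norm_num]
        gcongr ?_ * (_ * ?_)
        exacts [le_max_right _ _,
          Real.rpow_le_rpow_of_exponent_ge hρ0 hρ.2 (by norm_num)]

lemma abs_besselKernel_le {α lam mu A B p q : ℝ} (hpq : -1 < p + q)
    (hlam : ∀ ρ ∈ Ioc (0 : ℝ) 1, |besselJ α √(ρ * lam)| ≤ A * ρ ^ p)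
    (hmu : ∀ ρ ∈ Ioc (0 : ℝ) 1, |besselJ α √(ρ * mu)| ≤ B * ρ ^ q) :
    |besselKernel α lam mu| ≤ A * B / (4 * (p + q + 1)) := by
  have hpointwise : ∀ ρ ∈ Ioc (0 : ℝ) 1,
      ‖besselJ α √(ρ * lam) * besselJ α √(ρ * mu)‖ ≤ A * B * ρ ^ (p + q) := by
    intro ρ hρ
    calc ‖besselJ α √(ρ * lam) * besselJ α √(ρ * mu)‖ ≤ A * ρ ^ p * (B * ρ ^ q) := by
          rw [norm_mul]
          exact mul_le_mul (hlam ρ hρ) (hmu ρ hρ) (abs_nonneg _)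
            ((abs_nonneg _).trans (hlam ρ hρ))
      _ = A * B * ρ ^ (p + q) := by rw [Real.rpow_add hρ.1]; ring
  have hintegral := intervalIntegral.norm_integral_le_of_norm_le zero_le_one
    (Eventually.of_forall hpointwise)
    ((intervalIntegral.intervalIntegrable_rpow' hpq).const_mul (A * B))
  have hp : p + q + 1 ≠ 0 := by linarith
  rw [intervalIntegral.integral_const_mul, integral_rpow (Or.inl hpq), Real.one_rpow,
    Real.zero_rpow hp, sub_zero] at hintegral
  calc |besselKernel α lam mu|
      = 1 / 4 * ‖∫ ρ in (0 : ℝ)..1, besselJ α √(ρ * lam) * besselJ α √(ρ * mu)‖ := by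
        rw [besselKernel, abs_mul, abs_of_pos (by norm_num), Real.norm_eq_abs]
    _ ≤ 1 / 4 * (A * B * (1 / (p + q + 1))) := by gcongr
    _ = A * B / (4 * (p + q + 1)) := by field_simp

lemma exists_abs_besselKernel_le_rpow {α : ℝ} (hα : -1 < α) (R S : ℝ) :
    ∃ C > 0, ∀ lam ∈ Ioc 0 R, ∀ mu ∈ Ioc 0 S,
      |besselKernel α lam mu| ≤ C * lam ^ (α / 2) * mu ^ (α / 2) := by
  obtain ⟨M, hM, hlam⟩ := exists_abs_besselJ_sqrt_mul_le α R
  obtain ⟨N, hN, hmu⟩ := exists_abs_besselJ_sqrt_mul_le α S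
  have hα' : -1 < α / 2 + α / 2 := by linarith
  have hden : 0 < α / 2 + α / 2 + 1 := by linarith
  refine ⟨M * N / (4 * (α / 2 + α / 2 + 1)), by positivity, fun lam hl mu hm => ?_⟩
  exact (abs_besselKernel_le hα' (hlam lam hl) (hmu mu hm)).trans_eq (by ring)

lemma exists_abs_besselKernel_le_rpow_of_one_le {α : ℝ} (hα : -1 < α) (S : ℝ) :
    ∃ C > 0, ∀ lam ∈ Ici (1 : ℝ), ∀ mu ∈ Ioc 0 S,
      |besselKernel α lam mu| ≤ C * lam ^ (-(1 : ℝ) / 4) * mu ^ (α / 2) := by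
  obtain ⟨M, hM, hlam⟩ := exists_abs_besselJ_sqrt_mul_le_of_one_le hα
  obtain ⟨N, hN, hmu⟩ := exists_abs_besselJ_sqrt_mul_le α S
  have hα' : -1 < -(1 : ℝ) / 2 + α / 2 := by linarith
  have hden : 0 < -(1 : ℝ) / 2 + α / 2 + 1 := by linarith
  refine ⟨M * N / (4 * (-(1 : ℝ) / 2 + α / 2 + 1)), by positivity, fun lam hl mu hm => ?_⟩
  exact (abs_besselKernel_le hα' (hlam lam hl) (hmu mu hm)).trans_eq (by ring)

lemma abs_div_le_of_le_mul_of_mul_le {x y p w c C D : ℝ} (hp : 0 < p) (hw : 0 ≤ w) (hc : 0 < c)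
    (hCD : C ≤ D) (hx : |x| ≤ C * w * p) (hy : c * p ≤ |y|) : |x / y| ≤ D / c * w := by
  rw [abs_div]
  calc |x| / |y| ≤ C * w * p / (c * p) :=
        div_le_div₀ ((abs_nonneg x).trans hx) hx (mul_pos hc hp) hy
    _ = C / c * w := by field_simp
    _ ≤ D / c * w := by gcongr

theorem besselKernel_ratio_bound_general {α : ℝ} (hα : -1 < α) {K : Set ℝ} (hK : IsCompact K)
    (hne : ∀ ξ ∈ K, 0 < ξ → besselJ α ξ ≠ 0) :
    ∃ C > (0 : ℝ), ∀ ξ ∈ K, 0 < ξ →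
      (∀ mu ∈ Ioc (0 : ℝ) 1,
        |besselKernel α mu (ξ ^ 2) / besselJ α ξ| ≤ C * mu ^ (α / 2)) ∧
      (∀ mu : ℝ, 1 ≤ mu →
        |besselKernel α mu (ξ ^ 2) / besselJ α ξ| ≤ C * mu ^ (-(1 : ℝ) / 4)) := by
  obtain ⟨S, hS⟩ := (hK.image (continuous_pow 2)).bddAbove
  obtain ⟨c, hc, hJ⟩ := exists_mul_rpow_le_abs_besselJ hα hK hne
  obtain ⟨C₀, hC₀, hsmall⟩ := exists_abs_besselKernel_le_rpow hα 1 S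
  obtain ⟨C₁, -, hlarge⟩ := exists_abs_besselKernel_le_rpow_of_one_le hα S
  refine ⟨max C₀ C₁ / c, by positivity, fun ξ hξK hξ => ?_⟩
  have hmem : ξ ^ 2 ∈ Ioc 0 S := ⟨by positivity, hS (mem_image_of_mem _ hξK)⟩
  have hsq : (ξ ^ 2) ^ (α / 2) = ξ ^ α := by
    rw [Real.rpow_div_two_eq_sqrt α (sq_nonneg ξ), Real.sqrt_sq hξ.le]
  have hξα : 0 < ξ ^ α := Real.rpow_pos_of_pos hξ α
  refine ⟨fun mu hmu => ?_, fun mu hmu => ?_⟩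
  · exact abs_div_le_of_le_mul_of_mul_le hξα (Real.rpow_nonneg hmu.1.le _) hc (le_max_left _ _)
      (hsq ▸ hsmall mu hmu _ hmem) (hJ ξ hξK hξ)
  · exact abs_div_le_of_le_mul_of_mul_le hξα (Real.rpow_nonneg (zero_le_one.trans hmu) _) hc
      (le_max_right _ _) (hsq ▸ hlarge mu hmu _ hmem) (hJ ξ hξK hξ)

end BesselKernel

/-- Fix `α > -1` and `ξ₀ < min(j_α, j_{α+1})`. Uniformly for `0 < ξ < ξ₀`, the ratio
`K_Be(μ, ξ²)/J_α(ξ)` is `O(μ^{α/2})` for `0 < μ ≤ 1` and `O(μ^{-1/4})` for `μ ≥ 1`. -/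
theorem besselKernel_ratio_bound (α : ℝ) (hα : -1 < α) (ξ₀ : ℝ)
    (hξ₀ : ξ₀ < min (besselJZero α) (besselJZero (α + 1))) :
    ∃ C > (0:ℝ), ∀ ξ : ℝ, 0 < ξ → ξ < ξ₀ →
      (∀ mu ∈ Ioc (0:ℝ) 1,
        |besselKernel α mu (ξ ^ 2) / besselJ α ξ| ≤ C * mu ^ (α / 2)) ∧
      (∀ mu : ℝ, 1 ≤ mu →
        |besselKernel α mu (ξ ^ 2) / besselJ α ξ| ≤ C * mu ^ (-(1:ℝ)/4)) := by
  obtain ⟨C, hC, hbound⟩ := besselKernel_ratio_bound_general hα (isCompact_Icc (a := 0) (b := ξ₀))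
    fun _ hξ hpos => besselJ_ne_zero_of_lt_besselJZero hpos (hξ.2.trans_lt (lt_min_iff.1 hξ₀).1)
  exact ⟨C, hC, fun ξ hpos hlt => hbound ξ ⟨hpos.le, hlt.le⟩ hpos⟩
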